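/- arXiv:1905.10719 — 4 statements merged into one kernel-verified Lean document; each statement's English description precedes it below -/
import Mathlib

section
/- If a Banach algebra A is semi-amenable, then A has a bounded approximate identity. -/
/-!
Let `X` be a Banach `A`-bimodule. Replacing its left action by zero kills the right action on `X*`,
so every left module map `A → X*` becomes a derivation, and semi-amenability writes it as
`a ↦ a • η`; the right-handed version is symmetric. For `X = A*` and the canonical map `A → A**`
this gives `η, ξ ∈ A**` with `a • η = a = ξ • a` for all `a`, up to a sign absorbed in `ξ`. By
Hahn–Banach separation (Goldstine's and Mazur's theorems in one step), `η` and `ξ` may be replaced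
by bounded nets `(e)` and `(f)` in `A`, at the price of having these identities only as norm limits.
Since `1 - (e + f - e * f) = (1 - e) * (1 - f)`, the net `e + f - e * f` is then a two-sided
approximate identity.
-/

open Filter Topology

structure BanachBimodule (A : Type) [NonUnitalNormedRing A] [NormedSpace ℂ A]
    (X : Type) [NormedAddCommGroup X] [NormedSpace ℂ X] where
  lsmul : A →L[ℂ] X →L[ℂ] X
  rsmul : A →L[ℂ] X →L[ℂ] X
  lsmul_mul : ∀ a b x, lsmul (a * b) x = lsmul a (lsmul b x)
  rsmul_mul : ∀ a b x, rsmul (a * b) x = rsmul b (rsmul a x)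
  lsmul_rsmul : ∀ a b x, rsmul b (lsmul a x) = lsmul a (rsmul b x)

namespace BanachBimodule

variable {A : Type} [NonUnitalNormedRing A] [NormedSpace ℂ A]
variable {X : Type} [NormedAddCommGroup X] [NormedSpace ℂ X]

/-- The dual Banach bimodule on `X →L[ℂ] ℂ`, with `(a • f) x = f (x • a)` and
`(f • a) x = f (a • x)`. -/
noncomputable def dual (M : BanachBimodule A X) :
    BanachBimodule A (X →L[ℂ] ℂ) where
  lsmul := ((ContinuousLinearMap.compL ℂ X X ℂ).flip).comp M.rsmul
  rsmul := ((ContinuousLinearMap.compL ℂ X X ℂ).flip).comp M.lsmul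
  lsmul_mul := by
    intro a b f
    ext x
    exact congrArg f (M.rsmul_mul a b x)
  rsmul_mul := by
    intro a b f
    ext x
    exact congrArg f (M.lsmul_mul a b x)
  lsmul_rsmul := by
    intro a b f
    ext x
    exact congrArg f (M.lsmul_rsmul b a x)

def IsDerivation (M : BanachBimodule A X) (D : A →L[ℂ] X) : Prop :=
  ∀ a b : A, D (a * b) = M.lsmul a (D b) + M.rsmul b (D a)

def IsInner (M : BanachBimodule A X) (D : A →L[ℂ] X) : Prop :=
  ∃ x : X, ∀ a : A, D a = M.lsmul a x - M.rsmul a x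

def IsSemiInner (M : BanachBimodule A X) (D : A →L[ℂ] X) : Prop :=
  ∃ η ξ : X, ∀ a : A, D a = M.lsmul a η - M.rsmul a ξ

def IsApproxSemiInner (M : BanachBimodule A X) (D : A →L[ℂ] X) : Prop :=
  ∃ (ι : Type) (l : Filter ι) (η ξ : ι → X), l.NeBot ∧
    ∀ a : A, Tendsto (fun i => M.lsmul a (η i) - M.rsmul a (ξ i)) l (𝓝 (D a))

end BanachBimodule

/-- A Banach algebra `A` is amenable if every continuous derivation from `A` into the dual of
any Banach `A`-bimodule is inner. -/
def Amenable (A : Type) [NonUnitalNormedRing A] [NormedSpace ℂ A] : Prop :=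
  ∀ (X : Type) [NormedAddCommGroup X] [NormedSpace ℂ X] [CompleteSpace X],
    ∀ (M : BanachBimodule A X) (D : A →L[ℂ] (X →L[ℂ] ℂ)),
      M.dual.IsDerivation D → M.dual.IsInner D

/-- A Banach algebra `A` is semi-amenable if every continuous derivation from `A` into the dual of
any Banach `A`-bimodule is semi-inner. -/
def SemiAmenable (A : Type) [NonUnitalNormedRing A] [NormedSpace ℂ A] : Prop :=
  ∀ (X : Type) [NormedAddCommGroup X] [NormedSpace ℂ X] [CompleteSpace X],
    ∀ (M : BanachBimodule A X) (D : A →L[ℂ] (X →L[ℂ] ℂ)),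
      M.dual.IsDerivation D → M.dual.IsSemiInner D

/-- A Banach algebra `A` is approximately semi-amenable if every continuous derivation from `A`
into the dual of any Banach `A`-bimodule is approximately semi-inner. -/
def ApproxSemiAmenable (A : Type) [NonUnitalNormedRing A] [NormedSpace ℂ A] : Prop :=
  ∀ (X : Type) [NormedAddCommGroup X] [NormedSpace ℂ X] [CompleteSpace X],
    ∀ (M : BanachBimodule A X) (D : A →L[ℂ] (X →L[ℂ] ℂ)),
      M.dual.IsDerivation D → M.dual.IsApproxSemiInner D

/-- A Banach algebra `A` is semi-contractible if every continuous derivation from `A` into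
any Banach `A`-bimodule is semi-inner. -/
def SemiContractible (A : Type) [NonUnitalNormedRing A] [NormedSpace ℂ A] : Prop :=
  ∀ (X : Type) [NormedAddCommGroup X] [NormedSpace ℂ X] [CompleteSpace X],
    ∀ (M : BanachBimodule A X) (D : A →L[ℂ] X),
      M.IsDerivation D → M.IsSemiInner D

/-- A Banach algebra `A` is approximately semi-contractible if every continuous derivation from `A`
into any Banach `A`-bimodule is approximately semi-inner. -/
def ApproxSemiContractible (A : Type) [NonUnitalNormedRing A] [NormedSpace ℂ A] : Prop :=
  ∀ (X : Type) [NormedAddCommGroup X] [NormedSpace ℂ X] [CompleteSpace X],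
    ∀ (M : BanachBimodule A X) (D : A →L[ℂ] X),
      M.IsDerivation D → M.IsApproxSemiInner D

section Bidual

open Metric RCLike

variable {𝕜 E F ι : Type*} [RCLike 𝕜] [NormedAddCommGroup E] [NormedSpace 𝕜 E]
  [SeminormedAddCommGroup F] [NormedSpace 𝕜 F]

theorem norm_apply_le_of_forall_closedBall_re_le {f : StrongDual 𝕜 E} {r u : ℝ}
    (h : ∀ z ∈ closedBall (0 : E) r, re (f z) ≤ u) {z : E} (hz : z ∈ closedBall 0 r) :
    ‖f z‖ ≤ u := by
  obtain ⟨c, hc, hcz⟩ := exists_norm_eq_mul_self (f z)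
  have hmem : c • z ∈ closedBall (0 : E) r := by simpa [norm_smul, hc] using hz
  calc ‖f z‖ = re (f (c • z)) := by rw [map_smul, smul_eq_mul, ← hcz, ofReal_re]
    _ ≤ u := h _ hmem

theorem mul_opNorm_le_of_forall_closedBall_re_le {f : StrongDual 𝕜 E} {r u : ℝ} (hr : 0 ≤ r)
    (h : ∀ z ∈ closedBall (0 : E) r, re (f z) ≤ u) : r * ‖f‖ ≤ u := by
  obtain rfl | hr := hr.eq_or_lt
  · simpa using h 0 (by simp)
  have hu : 0 ≤ u := by simpa using h 0 (by simp [hr.le])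
  rw [mul_comm, ← le_div_iff₀ hr]
  exact f.opNorm_le_bound (by positivity) fun z =>
    LinearMap.bound_of_ball_bound' hr u f.toLinearMap
      (fun _ => norm_apply_le_of_forall_closedBall_re_le h) z

theorem mem_closure_image_closedBall_of_bidual (Φ : StrongDual 𝕜 (StrongDual 𝕜 E))
    (T : E →L[𝕜] F) (y : F) (h : ∀ φ : StrongDual 𝕜 F, φ y = Φ (φ ∘L T)) :
    y ∈ closure (T '' closedBall 0 ‖Φ‖) := by
  let : NormedSpace ℝ E := .restrictScalars ℝ 𝕜 E
  let : NormedSpace ℝ F := .restrictScalars ℝ 𝕜 F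
  have : IsScalarTower ℝ 𝕜 E := .restrictScalars ℝ 𝕜 E
  have : IsScalarTower ℝ 𝕜 F := .restrictScalars ℝ 𝕜 F
  by_contra hy
  have hconv : Convex ℝ (T '' closedBall 0 ‖Φ‖) :=
    (convex_closedBall 0 _).linear_image (T.restrictScalars ℝ).toLinearMap
  obtain ⟨φ, u, hball, hφy⟩ := geometric_hahn_banach_closed_point (𝕜 := 𝕜)
    hconv.closure isClosed_closure hy
  have hφT : ‖Φ‖ * ‖φ ∘L T‖ ≤ u := mul_opNorm_le_of_forall_closedBall_re_le (norm_nonneg Φ)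
    fun z hz => (hball _ (subset_closure (Set.mem_image_of_mem T hz))).le
  refine hφy.not_ge ?_
  calc re (φ y) ≤ ‖φ y‖ := re_le_norm _
    _ = ‖Φ (φ ∘L T)‖ := by rw [h]
    _ ≤ ‖Φ‖ * ‖φ ∘L T‖ := Φ.le_opNorm _
    _ ≤ u := hφT

theorem mem_closure_of_forall_restrict_mem_closure {X : ι → Type*} [∀ i, TopologicalSpace (X i)]
    {s : Set (∀ i, X i)} {x : ∀ i, X i}
    (h : ∀ I : Finset ι, I.restrict x ∈ closure (I.restrict '' s)) : x ∈ closure s := by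
  rw [_root_.mem_closure_iff]
  intro o ho hx
  obtain ⟨I, u, hu, hIu⟩ := isOpen_pi_iff.1 ho x hx
  obtain ⟨_, hzu, z, hz, rfl⟩ := _root_.mem_closure_iff.1 (h I) (Set.univ.pi fun i => u i)
    (isOpen_set_pi Set.finite_univ fun i _ => (hu i i.2).1) fun i _ => (hu i i.2).2
  exact ⟨z, hIu fun i hi => hzu ⟨i, hi⟩ trivial, hz⟩

variable {G : ι → Type*} [∀ i, SeminormedAddCommGroup (G i)] [∀ i, NormedSpace 𝕜 (G i)]

theorem pi_mem_closure_image_closedBall_of_bidual (Φ : StrongDual 𝕜 (StrongDual 𝕜 E))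
    (T : ∀ i, E →L[𝕜] G i) (y : ∀ i, G i)
    (h : ∀ i, ∀ φ : StrongDual 𝕜 (G i), φ (y i) = Φ (φ ∘L T i)) :
    y ∈ closure (ContinuousLinearMap.pi T '' closedBall 0 ‖Φ‖) := by
  classical
  refine mem_closure_of_forall_restrict_mem_closure fun I => ?_
  rw [Set.image_image]
  refine mem_closure_image_closedBall_of_bidual Φ (.pi fun i : I => T i) (I.restrict y) fun φ => ?_
  let φ' (i : I) : StrongDual 𝕜 (G i) := φ ∘L .single 𝕜 (fun i : I => G i) i
  have hφ (w : ∀ i : I, G i) : φ w = ∑ i, φ' i (w i) :=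
    (ContinuousLinearMap.sum_comp_single _ _ φ w).symm
  have hφT : φ ∘L .pi (fun i : I => T i) = ∑ i, φ' i ∘L T i := by
    ext z
    simp [hφ]
  rw [hφ, hφT, map_sum]
  exact Finset.sum_congr rfl fun i _ => h i (φ' i)

theorem exists_filter_forall_tendsto_of_bidual (Φ : StrongDual 𝕜 (StrongDual 𝕜 E))
    (T : ∀ i, E →L[𝕜] G i) (y : ∀ i, G i)
    (h : ∀ i, ∀ φ : StrongDual 𝕜 (G i), φ (y i) = Φ (φ ∘L T i)) :
    ∃ l : Filter E, l.NeBot ∧ (∀ᶠ z in l, ‖z‖ ≤ ‖Φ‖) ∧ ∀ i, Tendsto (T i) l (𝓝 (y i)) := by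
  have hy := pi_mem_closure_image_closedBall_of_bidual Φ T y h
  refine ⟨comap (ContinuousLinearMap.pi T) (𝓝 y) ⊓ 𝓟 (closedBall 0 ‖Φ‖), ?_, ?_, fun i => ?_⟩
  · rwa [neBot_inf_comap_iff_map', map_principal, ← ClusterPt, ← mem_closure_iff_clusterPt]
  · filter_upwards [mem_inf_of_right (mem_principal_self _)] with z hz using by simpa using hz
  · exact (tendsto_pi_nhds.1 tendsto_comap i).mono_left inf_le_left

end Bidual

section ApproximateUnit

variable {A : Type*} [NonUnitalSeminormedRing A] {l₁ l₂ : Filter A} {C₁ C₂ : ℝ}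

theorem isApproximateUnit_map_add_sub_mul [l₁.NeBot] [l₂.NeBot]
    (hC₁ : ∀ᶠ e in l₁, ‖e‖ ≤ C₁) (hC₂ : ∀ᶠ f in l₂, ‖f‖ ≤ C₂)
    (hl₁ : ∀ a, Tendsto (a * ·) l₁ (𝓝 a)) (hl₂ : ∀ a, Tendsto (· * a) l₂ (𝓝 a)) :
    (map (fun p : A × A => p.1 + p.2 - p.1 * p.2) (l₁ ×ˢ l₂)).IsApproximateUnit where
  tendsto_mul_left a := by
    have he : Tendsto (fun p : A × A => a * p.1) (l₁ ×ˢ l₂) (𝓝 a) := (hl₁ a).comp tendsto_fst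
    have hbdd : IsBoundedUnder (· ≤ ·) (l₁ ×ˢ l₂) (norm ∘ Prod.snd) :=
      isBoundedUnder_of_eventually_le (tendsto_snd.eventually hC₂)
    have hsplit (e f : A) : a * (e + f - e * f) = a * e - (a * e - a) * f := by
      noncomm_ring
    have hlim := he.sub ((tendsto_sub_nhds_zero_iff.2 he).zero_mul_isBoundedUnder_le hbdd)
    simpa only [tendsto_map'_iff, Function.comp_def, hsplit, sub_zero] using hlim
  tendsto_mul_right a := by
    have hf : Tendsto (fun p : A × A => p.2 * a) (l₁ ×ˢ l₂) (𝓝 a) := (hl₂ a).comp tendsto_snd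
    have hbdd : IsBoundedUnder (· ≤ ·) (l₁ ×ˢ l₂) (norm ∘ Prod.fst) :=
      isBoundedUnder_of_eventually_le (tendsto_fst.eventually hC₁)
    have hsplit (e f : A) : (e + f - e * f) * a = f * a - e * (f * a - a) := by
      noncomm_ring
    have hlim := hf.sub (isBoundedUnder_le_mul_tendsto_zero hbdd (tendsto_sub_nhds_zero_iff.2 hf))
    simpa only [tendsto_map'_iff, Function.comp_def, hsplit, sub_zero] using hlim

theorem eventually_norm_add_sub_mul_le (hC₁ : ∀ᶠ e in l₁, ‖e‖ ≤ C₁) (hC₂ : ∀ᶠ f in l₂, ‖f‖ ≤ C₂) :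
    ∀ᶠ p in l₁ ×ˢ l₂, ‖p.1 + p.2 - p.1 * p.2‖ ≤ C₁ + C₂ + C₁ * C₂ := by
  filter_upwards [hC₁.prod_mk hC₂] with ⟨e, f⟩ ⟨he, hf⟩
  calc ‖e + f - e * f‖ ≤ ‖e‖ + ‖f‖ + ‖e‖ * ‖f‖ :=
        norm_sub_le_of_le (norm_add_le e f) (norm_mul_le e f)
    _ ≤ C₁ + C₂ + C₁ * C₂ := by gcongr; exact (norm_nonneg e).trans he

end ApproximateUnit

namespace BanachBimodule

variable {A : Type} [NonUnitalNormedRing A] [NormedSpace ℂ A]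

variable (A) in
/-- `A` as a bimodule over itself, acting by multiplication. -/
noncomputable def regular [IsScalarTower ℂ A A] [SMulCommClass ℂ A A] : BanachBimodule A A where
  lsmul := ContinuousLinearMap.mul ℂ A
  rsmul := (ContinuousLinearMap.mul ℂ A).flip
  lsmul_mul := mul_assoc
  rsmul_mul a b x := (mul_assoc x a b).symm
  lsmul_rsmul a b x := mul_assoc a x b

variable {X : Type} [NormedAddCommGroup X] [NormedSpace ℂ X]

/-- The bimodule `M` with its left action replaced by zero. Dualizing swaps sides, so it is the
right action of `A` on the dual that vanishes. -/
noncomputable def zeroLeft (M : BanachBimodule A X) : BanachBimodule A X where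
  lsmul := 0
  rsmul := M.rsmul
  lsmul_mul _ _ _ := rfl
  rsmul_mul := M.rsmul_mul
  lsmul_rsmul _ b _ := map_zero (M.rsmul b)

/-- The bimodule `M` with its right action replaced by zero. Dualizing swaps sides, so it is the
left action of `A` on the dual that vanishes. -/
noncomputable def zeroRight (M : BanachBimodule A X) : BanachBimodule A X where
  lsmul := M.lsmul
  rsmul := 0
  lsmul_mul := M.lsmul_mul
  rsmul_mul _ _ _ := rfl
  lsmul_rsmul a _ _ := (map_zero (M.lsmul a)).symm

theorem dual_zeroLeft (M : BanachBimodule A X) : M.zeroLeft.dual = M.dual.zeroRight := by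
  simp [dual, zeroLeft, zeroRight]

theorem dual_zeroRight (M : BanachBimodule A X) : M.zeroRight.dual = M.dual.zeroLeft := by
  simp [dual, zeroLeft, zeroRight]

end BanachBimodule

namespace SemiAmenable

variable {A : Type} [NonUnitalNormedRing A] [NormedSpace ℂ A]

section Dual

variable {X : Type} [NormedAddCommGroup X] [NormedSpace ℂ X] [CompleteSpace X]

theorem exists_forall_eq_lsmul (hA : SemiAmenable A) (M : BanachBimodule A X)
    (D : A →L[ℂ] StrongDual ℂ X) (hD : ∀ a b, D (a * b) = M.dual.lsmul a (D b)) :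
    ∃ η, ∀ a, D a = M.dual.lsmul a η := by
  have hder : M.zeroLeft.dual.IsDerivation D := by
    simpa [M.dual_zeroLeft, BanachBimodule.IsDerivation, BanachBimodule.zeroRight] using hD
  obtain ⟨η, _, h⟩ := hA X M.zeroLeft D hder
  exact ⟨η, by simpa [M.dual_zeroLeft, BanachBimodule.zeroRight] using h⟩

theorem exists_forall_eq_rsmul (hA : SemiAmenable A) (M : BanachBimodule A X)
    (D : A →L[ℂ] StrongDual ℂ X) (hD : ∀ a b, D (a * b) = M.dual.rsmul b (D a)) :
    ∃ ξ, ∀ a, D a = M.dual.rsmul a ξ := by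
  have hder : M.zeroRight.dual.IsDerivation D := by
    simpa [M.dual_zeroRight, BanachBimodule.IsDerivation, BanachBimodule.zeroLeft] using hD
  obtain ⟨_, ξ, h⟩ := hA X M.zeroRight D hder
  exact ⟨-ξ, by simpa [M.dual_zeroRight, BanachBimodule.zeroLeft] using h⟩

end Dual

variable [IsScalarTower ℂ A A] [SMulCommClass ℂ A A]

theorem exists_bidual_right_identity (hA : SemiAmenable A) :
    ∃ η : StrongDual ℂ (StrongDual ℂ A), ∀ (a : A) (f : StrongDual ℂ A),
      f a = η (f ∘L ContinuousLinearMap.mul ℂ A a) := by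
  obtain ⟨η, h⟩ := hA.exists_forall_eq_lsmul (BanachBimodule.regular A).dual
    (NormedSpace.inclusionInDoubleDual ℂ A) fun _ _ => rfl
  exact ⟨η, fun a => DFunLike.congr_fun (h a)⟩

theorem exists_bidual_left_identity (hA : SemiAmenable A) :
    ∃ ξ : StrongDual ℂ (StrongDual ℂ A), ∀ (a : A) (f : StrongDual ℂ A),
      f a = ξ (f ∘L (ContinuousLinearMap.mul ℂ A).flip a) := by
  obtain ⟨ξ, h⟩ := hA.exists_forall_eq_rsmul (BanachBimodule.regular A).dual
    (NormedSpace.inclusionInDoubleDual ℂ A) fun _ _ => rfl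
  exact ⟨ξ, fun a => DFunLike.congr_fun (h a)⟩

theorem exists_bounded_isApproximateUnit (hA : SemiAmenable A) :
    ∃ (l : Filter A) (C : ℝ), l.IsApproximateUnit ∧ ∀ᶠ e in l, ‖e‖ ≤ C := by
  obtain ⟨η, hη⟩ := hA.exists_bidual_right_identity
  obtain ⟨ξ, hξ⟩ := hA.exists_bidual_left_identity
  obtain ⟨l₁, _, hC₁, hl₁⟩ :=
    exists_filter_forall_tendsto_of_bidual η (ContinuousLinearMap.mul ℂ A) id hη
  obtain ⟨l₂, _, hC₂, hl₂⟩ :=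
    exists_filter_forall_tendsto_of_bidual ξ (ContinuousLinearMap.mul ℂ A).flip id hξ
  exact ⟨_, _, isApproximateUnit_map_add_sub_mul hC₁ hC₂ hl₁ hl₂,
    eventually_map.2 (eventually_norm_add_sub_mul_le hC₁ hC₂)⟩

end SemiAmenable

theorem semiAmenable_hasBoundedApproximateIdentity_general
    (A : Type) [NonUnitalNormedRing A] [NormedSpace ℂ A]
    [IsScalarTower ℂ A A] [SMulCommClass ℂ A A]
    (hA : SemiAmenable A) :
    ∃ (ι : Type) (l : Filter ι) (e : ι → A), l.NeBot ∧
      (∃ C : ℝ, ∀ i : ι, ‖e i‖ ≤ C) ∧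
      (∀ a : A, Tendsto (fun i => a * e i) l (𝓝 a) ∧
        Tendsto (fun i => e i * a) l (𝓝 a)) := by
  obtain ⟨l, C, hl, hC⟩ := hA.exists_bounded_isApproximateUnit
  have := hl.neBot
  refine ⟨{e : A // ‖e‖ ≤ C}, comap (↑) l, (↑), ?_, ⟨C, Subtype.property⟩, fun a => ⟨?_, ?_⟩⟩
  · exact comap_coe_neBot_of_le_principal (le_principal_iff.2 hC)
  · exact (hl.tendsto_mul_left a).comp tendsto_comap
  · exact (hl.tendsto_mul_right a).comp tendsto_comap

/-- If a Banach algebra `A` is semi-amenable, then `A` has a bounded approximate identity,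
i.e. a bounded net `(e_α)` with `a * e_α → a` and `e_α * a → a` in norm for every `a`. -/
theorem semiAmenable_hasBoundedApproximateIdentity
    (A : Type) [NonUnitalNormedRing A] [NormedSpace ℂ A]
    [IsScalarTower ℂ A A] [SMulCommClass ℂ A A] [CompleteSpace A]
    (hA : SemiAmenable A) :
    ∃ (ι : Type) (l : Filter ι) (e : ι → A), l.NeBot ∧
      (∃ C : ℝ, ∀ i : ι, ‖e i‖ ≤ C) ∧
      (∀ a : A, Tendsto (fun i => a * e i) l (𝓝 a) ∧
        Tendsto (fun i => e i * a) l (𝓝 a)) := by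
  exact semiAmenable_hasBoundedApproximateIdentity_general A hA
end

section
/- If a Banach algebra A is semi-contractible, then A has an identity element. -/
open Filter Topology

namespace BanachBimodule

variable {A : Type} [NonUnitalNormedRing A] [NormedSpace ℂ A]
variable {X : Type} [NormedAddCommGroup X] [NormedSpace ℂ X]

section OfLeft

variable (L : A →L[ℂ] X →L[ℂ] X) (hL : ∀ a b x, L (a * b) x = L a (L b x))

/-- The left Banach module given by `L`, made into a bimodule with zero right action. Killing the
right action turns derivations into left module maps, so that even the identity of `A` is a
derivation for the regular left action. -/
noncomputable def ofLeft : BanachBimodule A X where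
  lsmul := L
  rsmul := 0
  lsmul_mul := hL
  rsmul_mul _ _ _ := rfl
  lsmul_rsmul a _ _ := (map_zero (L a)).symm

theorem isDerivation_ofLeft_iff (D : A →L[ℂ] X) :
    (ofLeft L hL).IsDerivation D ↔ ∀ a b, D (a * b) = L a (D b) := by
  simp [IsDerivation, ofLeft]

theorem isSemiInner_ofLeft_iff (D : A →L[ℂ] X) :
    (ofLeft L hL).IsSemiInner D ↔ ∃ x, ∀ a, D a = L a x := by
  simp [IsSemiInner, ofLeft]

end OfLeft

section OfRight

variable (R : A →L[ℂ] X →L[ℂ] X) (hR : ∀ a b x, R (a * b) x = R b (R a x))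

/-- The right Banach module given by `R`, made into a bimodule with zero left action, so that
derivations become right module maps. -/
noncomputable def ofRight : BanachBimodule A X where
  lsmul := 0
  rsmul := R
  lsmul_mul _ _ _ := rfl
  rsmul_mul := hR
  lsmul_rsmul _ b _ := map_zero (R b)

theorem isDerivation_ofRight_iff (D : A →L[ℂ] X) :
    (ofRight R hR).IsDerivation D ↔ ∀ a b, D (a * b) = R b (D a) := by
  simp [IsDerivation, ofRight]

theorem isSemiInner_ofRight_iff (D : A →L[ℂ] X) :
    (ofRight R hR).IsSemiInner D ↔ ∃ x, ∀ a, D a = R a x := by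
  constructor
  · rintro ⟨_, ξ, hξ⟩
    exact ⟨-ξ, fun a => by simpa [ofRight] using hξ a⟩
  · rintro ⟨x, hx⟩
    exact ⟨0, -x, fun a => by simpa [ofRight] using hx a⟩

end OfRight

end BanachBimodule

namespace SemiContractible

variable {A : Type} [NonUnitalNormedRing A] [NormedSpace ℂ A]

section ModuleMaps

variable {X : Type} [NormedAddCommGroup X] [NormedSpace ℂ X] [CompleteSpace X]

theorem exists_eq_of_map_mul_left (hA : SemiContractible A) {L : A →L[ℂ] X →L[ℂ] X}
    (hL : ∀ a b x, L (a * b) x = L a (L b x)) {D : A →L[ℂ] X}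
    (hD : ∀ a b, D (a * b) = L a (D b)) : ∃ x, ∀ a, D a = L a x :=
  (BanachBimodule.isSemiInner_ofLeft_iff L hL D).1 <|
    hA X _ D <| (BanachBimodule.isDerivation_ofLeft_iff L hL D).2 hD

theorem exists_eq_of_map_mul_right (hA : SemiContractible A) {R : A →L[ℂ] X →L[ℂ] X}
    (hR : ∀ a b x, R (a * b) x = R b (R a x)) {D : A →L[ℂ] X}
    (hD : ∀ a b, D (a * b) = R b (D a)) : ∃ x, ∀ a, D a = R a x :=
  (BanachBimodule.isSemiInner_ofRight_iff R hR D).1 <|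
    hA X _ D <| (BanachBimodule.isDerivation_ofRight_iff R hR D).2 hD

end ModuleMaps

section Identities

variable [IsScalarTower ℂ A A] [SMulCommClass ℂ A A] [CompleteSpace A]

theorem exists_right_identity (hA : SemiContractible A) : ∃ e : A, ∀ a : A, a * e = a := by
  obtain ⟨e, he⟩ := hA.exists_eq_of_map_mul_left (L := ContinuousLinearMap.mul ℂ A)
    (D := ContinuousLinearMap.id ℂ A) mul_assoc fun _ _ => rfl
  exact ⟨e, fun a => (he a).symm⟩

theorem exists_left_identity (hA : SemiContractible A) : ∃ e : A, ∀ a : A, e * a = a := by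
  obtain ⟨e, he⟩ := hA.exists_eq_of_map_mul_right (R := (ContinuousLinearMap.mul ℂ A).flip)
    (D := ContinuousLinearMap.id ℂ A) (fun a b x => (mul_assoc x a b).symm) fun _ _ => rfl
  exact ⟨e, fun a => (he a).symm⟩

end Identities

end SemiContractible

/-- If a Banach algebra `A` is semi-contractible, then `A` has an identity element. -/
theorem semiContractible_hasIdentity
    (A : Type) [NonUnitalNormedRing A] [NormedSpace ℂ A]
    [IsScalarTower ℂ A A] [SMulCommClass ℂ A A] [CompleteSpace A]
    (hA : SemiContractible A) :
    ∃ e : A, ∀ a : A, e * a = a ∧ a * e = a := by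
  obtain ⟨e, he⟩ := hA.exists_left_identity
  obtain ⟨f, hf⟩ := hA.exists_right_identity
  have hef : e = f := (hf e).symm.trans (he f)
  exact ⟨e, fun a => ⟨he a, hef ▸ hf a⟩⟩
end

section
/- Let A and B be Banach algebras and θ : B → A a continuous surjective algebra homomorphism. If B is semi-amenable, then A is semi-amenable. -/
open Filter Topology

/-! Restricting the actions along `θ : B → A` turns a Banach `A`-bimodule `X` into a Banach
`B`-bimodule, and this commutes with passing to `X*`. A derivation `D : A → X*` becomes the
derivation `D ∘ θ`, which is semi-inner, say `D (θ b) = θ b · η - ξ · θ b`. Both sides are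
continuous in `θ b`, so the identity passes from the range of `θ` to its closure. -/

namespace BanachBimodule

variable {A B X : Type} [NonUnitalNormedRing A] [NormedSpace ℂ A]
  [NonUnitalNormedRing B] [NormedSpace ℂ B] [NormedAddCommGroup X] [NormedSpace ℂ X]

/-- The Banach `B`-bimodule obtained from a Banach `A`-bimodule by restriction of scalars along a
continuous algebra homomorphism, encoded as a continuous linear map with a proof of
multiplicativity. -/
noncomputable def pullback (M : BanachBimodule A X) (T : B →L[ℂ] A)
    (hT : ∀ a b, T (a * b) = T a * T b) : BanachBimodule B X where
  lsmul := M.lsmul.comp T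
  rsmul := M.rsmul.comp T
  lsmul_mul a b x := by
    simp only [ContinuousLinearMap.comp_apply, hT, M.lsmul_mul]
  rsmul_mul a b x := by
    simp only [ContinuousLinearMap.comp_apply, hT, M.rsmul_mul]
  lsmul_rsmul a b := M.lsmul_rsmul (T a) (T b)

variable {M : BanachBimodule A X} {T : B →L[ℂ] A} {D : A →L[ℂ] X}

theorem dual_pullback (hT : ∀ a b, T (a * b) = T a * T b) :
    (M.pullback T hT).dual = M.dual.pullback T hT :=
  rfl

theorem IsDerivation.pullback (hD : M.IsDerivation D) (hT : ∀ a b, T (a * b) = T a * T b) :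
    (M.pullback T hT).IsDerivation (D.comp T) := fun a b ↦
  (congrArg D (hT a b)).trans (hD (T a) (T b))

theorem IsSemiInner.of_pullback {hT : ∀ a b, T (a * b) = T a * T b} (hdense : DenseRange T)
    (h : (M.pullback T hT).IsSemiInner (D.comp T)) : M.IsSemiInner D := by
  obtain ⟨η, ξ, hηξ⟩ := h
  have eq_semiInner : ⇑D = ⇑(M.lsmul.flip η - M.rsmul.flip ξ) :=
    hdense.equalizer D.continuous (ContinuousLinearMap.continuous _) (funext hηξ)
  exact ⟨η, ξ, congrFun eq_semiInner⟩

end BanachBimodule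

theorem semiAmenable_of_continuous_epimorphism_general
    {A B : Type} [NonUnitalNormedRing A] [NormedSpace ℂ A]
    [NonUnitalNormedRing B] [NormedSpace ℂ B]
    (θ : B →ₙₐ[ℂ] A) (hcont : Continuous θ) (hdense : DenseRange θ)
    (hB : SemiAmenable B) : SemiAmenable A := by
  intro X _ _ _ M D hD
  let T : B →L[ℂ] A := ⟨(θ : B →ₗ[ℂ] A), hcont⟩
  have hT : ∀ a b, T (a * b) = T a * T b := map_mul θ
  have hDT : (M.pullback T hT).dual.IsDerivation (D.comp T) := by
    rw [BanachBimodule.dual_pullback]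
    exact hD.pullback hT
  have semiInner_comp : (M.dual.pullback T hT).IsSemiInner (D.comp T) := by
    rw [← BanachBimodule.dual_pullback]
    exact hB X (M.pullback T hT) (D.comp T) hDT
  exact semiInner_comp.of_pullback hdense

/-- If `θ : B → A` is a continuous surjective algebra homomorphism between Banach algebras and
`B` is semi-amenable, then `A` is semi-amenable. -/
theorem semiAmenable_of_continuous_epimorphism
    (A B : Type) [NonUnitalNormedRing A] [NormedSpace ℂ A]
    [IsScalarTower ℂ A A] [SMulCommClass ℂ A A] [CompleteSpace A]
    [NonUnitalNormedRing B] [NormedSpace ℂ B]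
    [IsScalarTower ℂ B B] [SMulCommClass ℂ B B] [CompleteSpace B]
    (θ : B →ₙₐ[ℂ] A) (hcont : Continuous θ) (hsurj : Function.Surjective θ)
    (hB : SemiAmenable B) : SemiAmenable A :=
  semiAmenable_of_continuous_epimorphism_general θ hcont hsurj.denseRange hB
end

section
/- Let A and B be Banach algebras and θ : B → A a continuous surjective algebra homomorphism. If B is approximately semi-amenable, then A is approximately semi-amenable. -/
open Filter Topology

/-!
Along a continuous homomorphism `θ : B → A`, an `A`-bimodule `X` becomes a `B`-bimodule, and a
derivation `D : A → X*` pulls back to the derivation `D ∘ θ : B → X*`. Pulling back leaves `X*`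
unchanged as a space, so nets `(η_α)`, `(ξ_α)` which implement `D ∘ θ` satisfy
`D (θ b) = lim (θ b • η_α - ξ_α • θ b)` for all `b`. As `θ` is surjective, the same nets
implement `D`.
-/

namespace BanachBimodule

variable {A B X : Type} [NonUnitalNormedRing A] [NormedSpace ℂ A]
  [NonUnitalNormedRing B] [NormedSpace ℂ B] [NormedAddCommGroup X] [NormedSpace ℂ X]

/-- The pullback of an `A`-bimodule along a continuous algebra homomorphism `φ : B → A`: the
`B`-bimodule on the same space with `b • x = φ b • x` and `x • b = x • φ b`. The homomorphism is
encoded as a continuous linear map together with its multiplicativity, so that it composes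
directly with the module actions and with derivations. -/
noncomputable def comap (M : BanachBimodule A X) (φ : B →L[ℂ] A)
    (hφ : ∀ b c, φ (b * c) = φ b * φ c) : BanachBimodule B X where
  lsmul := M.lsmul.comp φ
  rsmul := M.rsmul.comp φ
  lsmul_mul b c x := by
    simp only [ContinuousLinearMap.comp_apply, hφ, M.lsmul_mul]
  rsmul_mul b c x := by
    simp only [ContinuousLinearMap.comp_apply, hφ, M.rsmul_mul]
  lsmul_rsmul b c x := M.lsmul_rsmul (φ b) (φ c) x

theorem dual_comap (M : BanachBimodule A X) (φ : B →L[ℂ] A)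
    (hφ : ∀ b c, φ (b * c) = φ b * φ c) : (M.comap φ hφ).dual = M.dual.comap φ hφ :=
  rfl

variable {M : BanachBimodule A X} {φ : B →L[ℂ] A} {D : A →L[ℂ] X}

theorem IsDerivation.comap (hD : M.IsDerivation D) (hφ : ∀ b c, φ (b * c) = φ b * φ c) :
    (M.comap φ hφ).IsDerivation (D.comp φ) := fun b c =>
  calc D (φ (b * c)) = D (φ b * φ c) := by rw [hφ]
    _ = M.lsmul (φ b) (D (φ c)) + M.rsmul (φ c) (D (φ b)) := hD (φ b) (φ c)

theorem isApproxSemiInner_comap_iff (hφ : ∀ b c, φ (b * c) = φ b * φ c)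
    (hsurj : Function.Surjective φ) :
    (M.comap φ hφ).IsApproxSemiInner (D.comp φ) ↔ M.IsApproxSemiInner D := by
  simp only [IsApproxSemiInner, comap, hsurj.forall, ContinuousLinearMap.comp_apply]

end BanachBimodule

theorem approxSemiAmenable_of_continuous_epimorphism_general
    {A B : Type} [NonUnitalNormedRing A] [NormedSpace ℂ A]
    [NonUnitalNormedRing B] [NormedSpace ℂ B]
    (θ : B →ₙₐ[ℂ] A) (hcont : Continuous θ) (hsurj : Function.Surjective θ)
    (hB : ApproxSemiAmenable B) : ApproxSemiAmenable A := by
  intro X _ _ _ M D hD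
  let φ : B →L[ℂ] A := ⟨θ, hcont⟩
  have hφ : ∀ b c, φ (b * c) = φ b * φ c := map_mul θ
  have hDφ : (M.comap φ hφ).dual.IsDerivation (D.comp φ) := by
    rw [M.dual_comap]
    exact hD.comap hφ
  have hinner : (M.dual.comap φ hφ).IsApproxSemiInner (D.comp φ) := by
    rw [← M.dual_comap]
    exact hB X (M.comap φ hφ) (D.comp φ) hDφ
  exact (BanachBimodule.isApproxSemiInner_comap_iff hφ hsurj).mp hinner

/-- If `θ : B → A` is a continuous surjective algebra homomorphism between Banach algebras and
`B` is approximately semi-amenable, then `A` is approximately semi-amenable. -/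
theorem approxSemiAmenable_of_continuous_epimorphism
    (A B : Type) [NonUnitalNormedRing A] [NormedSpace ℂ A]
    [IsScalarTower ℂ A A] [SMulCommClass ℂ A A] [CompleteSpace A]
    [NonUnitalNormedRing B] [NormedSpace ℂ B]
    [IsScalarTower ℂ B B] [SMulCommClass ℂ B B] [CompleteSpace B]
    (θ : B →ₙₐ[ℂ] A) (hcont : Continuous θ) (hsurj : Function.Surjective θ)
    (hB : ApproxSemiAmenable B) : ApproxSemiAmenable A :=
  approxSemiAmenable_of_continuous_epimorphism_general θ hcont hsurj hB
end
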